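/- arXiv:1104.3543 — 3 statements merged into one kernel-verified Lean document; each statement's English description precedes it below -/
import Mathlib

section
/- Let β < ω₁ and suppose that for every block subspace X ⊆ W there are K ≥ 1 and a block sequence (y_n) in X such that player II has a strategy in F^β_X to play outcomes (x_0,…,x_k) satisfying (x_0,…,x_k) ∼_K (y_0,…,y_k). Then there are K ≥ 1 and a block subspace Y ⊆ W such that for every block subspace X ⊆ Y there is a block sequence (y_n) in X such that II has a strategy in F^β_X to play outcomes (x_0,…,x_k) satisfying (x_0,…,x_k) ∼_K (y_0,…,y_k); i.e., the constant K can be chosen uniformly for all X ⊆ Y. -/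
open Filter Topology

namespace Rosendal

variable {𝒲 : Type} [NormedAddCommGroup 𝒲] [NormedSpace ℝ 𝒲]

/-- `(e n)` is a Schauder basis of the Banach space `𝒲`. -/
def IsSchauderBasis (e : ℕ → 𝒲) : Prop :=
  ∀ x : 𝒲, ∃! a : ℕ → ℝ,
    Tendsto (fun N => ∑ i ∈ Finset.range N, a i • e i) atTop (𝓝 x)

/-- `x` is a linear combination of the vectors `b i`, `i ∈ s`. -/
def SuppIn (b : ℕ → 𝒲) (x : 𝒲) (s : Finset ℕ) : Prop :=
  ∃ a : ℕ → ℝ, x = ∑ i ∈ s, a i • b i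

/-- `(x i)_{i<k} ∼_K (y i)_{i<k}`. -/
def SeqEquiv (K : ℝ) (k : ℕ) (x y : ℕ → 𝒲) : Prop :=
  ∀ a : ℕ → ℝ,
    (1 / K) * ‖∑ i ∈ Finset.range k, a i • x i‖ ≤ ‖∑ i ∈ Finset.range k, a i • y i‖ ∧
    ‖∑ i ∈ Finset.range k, a i • y i‖ ≤ K * ‖∑ i ∈ Finset.range k, a i • x i‖

/-- The outcome `l = (x 0, …, x k)` satisfies `(x 0, …, x k) ∼_K (y 0, …, y k)`. -/
def OutcomeEquiv (K : ℝ) (l : List 𝒲) (y : ℕ → 𝒲) : Prop :=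
  SeqEquiv K l.length (fun i => l.getD i 0) y

/-- The outcome `l = (u 0, v 0, u 1, v 1, …, u k, v k)` satisfies
`(u 0, …, u k) ∼_K (v 0, …, v k)`. -/
def PairOutcomeEquiv (K : ℝ) (l : List 𝒲) : Prop :=
  SeqEquiv K (l.length / 2) (fun i => l.getD (2 * i) 0) (fun i => l.getD (2 * i + 1) 0)

/-- The tree `T((x n), Y, K)`. -/
def embTree (x : ℕ → 𝒲) (Y : Set 𝒲) (K : ℝ) : Set (List 𝒲) :=
  {l | (∀ v ∈ l, v ∈ Y) ∧ SeqEquiv K l.length (fun i => l.getD i 0) x}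

open Classical in
/-- The rank of a tree of finite sequences; `⊤ = ∞` if it is ill-founded. -/
noncomputable def treeRank (T : Set (List 𝒲)) : WithTop Ordinal :=
  if h : WellFounded (fun t s : T => s.val <+: t.val ∧ s.val ≠ t.val) then
    ((⨆ s : T, Order.succ ((h.apply s).rank) : Ordinal) : WithTop Ordinal)
  else ⊤

open Classical in
/-- The embeddability index `Emb((x n), Y) = sup_{K ≥ 1} rank T((x n), Y, K)`. -/
noncomputable def embIndex (x : ℕ → 𝒲) (Y : Set 𝒲) : WithTop Ordinal :=
  if ∃ K : ℝ, 1 ≤ K ∧ treeRank (embTree x Y K) = ⊤ then ⊤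
  else ((sSup {o : Ordinal | ∃ K : ℝ, 1 ≤ K ∧
      (o : WithTop Ordinal) = treeRank (embTree x Y K)} : Ordinal) : WithTop Ordinal)

/-- `(I m)` is a sequence of successive nonempty finite intervals `I 0 < I 1 < …` of `ℕ`. -/
def IntervalSeq (I : ℕ → Finset ℕ) : Prop :=
  (∀ m, ∃ a b : ℕ, a ≤ b ∧ I m = Finset.Icc a b) ∧
  ∀ m, ∀ i ∈ I m, ∀ j ∈ I (m + 1), i < j

/-- The setting of Section 2 of the paper: a Banach space `𝒲` with a Schauder basis
`(e n)`, a countable subfield `𝔽 ⊆ ℝ` closed under the norms of finite `𝔽`-linear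
combinations of the basis, and the countable `𝔽`-vector space `W` spanned by `(e n)`. -/
structure Frame (𝒲 : Type) [NormedAddCommGroup 𝒲] [NormedSpace ℝ 𝒲] : Type where
  e : ℕ → 𝒲
  complete : CompleteSpace 𝒲
  basis : IsSchauderBasis e
  𝔽 : Subfield ℝ
  countable : (𝔽 : Set ℝ).Countable
  norm_mem : ∀ (s : Finset ℕ) (a : ℕ → ℝ), (∀ i ∈ s, a i ∈ 𝔽) →
    ‖∑ i ∈ s, a i • e i‖ ∈ 𝔽

namespace Frame

variable {𝒲 : Type} [NormedAddCommGroup 𝒲] [NormedSpace ℝ 𝒲] (ctx : Frame 𝒲)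

/-- The `𝔽`-linear span of a set of vectors. -/
def fspan (S : Set 𝒲) : Set 𝒲 :=
  {v | ∃ t : Finset 𝒲, ↑t ⊆ S ∧ ∃ c : 𝒲 → ℝ, (∀ w, c w ∈ ctx.𝔽) ∧
    v = ∑ w ∈ t, c w • w}

/-- The countable `𝔽`-vector space `W` with basis `(e n)`. -/
def W : Set 𝒲 := ctx.fspan (Set.range ctx.e)

/-- `(y n)` is a block sequence with respect to the reference block basis `(b n)`:
a sequence of nonzero vectors of the `𝔽`-span of `(b n)` with successive supports. -/
def BlockSeqRel (b y : ℕ → 𝒲) : Prop :=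
  (∀ n, y n ∈ ctx.fspan (Set.range b)) ∧ (∀ n, y n ≠ 0) ∧
  ∃ D : ℕ → Finset ℕ, (∀ n, SuppIn b (y n) (D n)) ∧
    ∀ n, ∀ i ∈ D n, ∀ j ∈ D (n + 1), i < j

/-- `(y n)` is a block sequence (with respect to the basis `(e n)` of `W`). -/
def IsBlockSeq (y : ℕ → 𝒲) : Prop := ctx.BlockSeqRel ctx.e y

/-- `Y` is a block subspace of `X`: the `𝔽`-span of an infinite block sequence of
vectors of `X`. -/
def IsBlockSubspaceOf (Y X : Set 𝒲) : Prop :=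
  ∃ y : ℕ → 𝒲, ctx.IsBlockSeq y ∧ (∀ n, y n ∈ X) ∧ Y = ctx.fspan (Set.range y)

/-- `Y` is a block subspace of `W`. -/
def IsBlockSubspace (Y : Set 𝒲) : Prop := ctx.IsBlockSubspaceOf Y ctx.W

/-- `F` is a finite-dimensional `𝔽`-subspace of `X`. -/
def IsFinDimIn (F X : Set 𝒲) : Prop :=
  ∃ t : Finset 𝒲, ↑t ⊆ X ∧ F = ctx.fspan ↑t

/-- `n < F`: every vector of `F` is supported on basis vectors of index `> n`. -/
def NatLt (n : ℕ) (F : Set 𝒲) : Prop :=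
  ∀ x ∈ F, ∃ s : Finset ℕ, SuppIn ctx.e x s ∧ ∀ i ∈ s, n < i

/-- `V` is an `𝔽`-subspace of `𝒲`. -/
def IsSubspace (V : Set 𝒲) : Prop :=
  (0 : 𝒲) ∈ V ∧ (∀ u v : 𝒲, u ∈ V → v ∈ V → u + v ∈ V) ∧
    ∀ c : ℝ, c ∈ ctx.𝔽 → ∀ v ∈ V, c • v ∈ V

/-- `V` is infinite-dimensional (not contained in a finitely generated subspace). -/
def IsInfDim (V : Set 𝒲) : Prop :=
  ¬∃ t : Finset 𝒲, V ⊆ ctx.fspan ↑t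

/-- Game values of the asymptotic game `F^β_X`, for player II, computed by transfinite
recursion on the ordinal bound.  `IIWinsF X S β Facc vec` states: in the asymptotic game
below `X`, from a position where the vectors `vec` have been played and the
finite-dimensional subspaces played by II span `Facc`, and where I must now play a natural
number together with an ordinal `< β`, player II has a strategy so that the final outcome
lies in `S`. -/
noncomputable def IIWinsF (X : Set 𝒲) (S : Set (List 𝒲)) :
    Ordinal → Set 𝒲 → List 𝒲 → Prop :=
  WellFounded.fix (C := fun _ : Ordinal => Set 𝒲 → List 𝒲 → Prop) Ordinal.lt_wf
    (fun β ih Facc vec =>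
      ∀ n : ℕ, ∀ ξ : Ordinal, ∀ hξ : ξ < β,
        ∃ F : Set 𝒲, ctx.IsFinDimIn F X ∧ ctx.NatLt n F ∧
          ∃ x : 𝒲, x ≠ 0 ∧ x ∈ ctx.fspan (Facc ∪ F) ∧
            (ξ = 0 → vec ++ [x] ∈ S) ∧
            (ξ ≠ 0 → ih ξ hξ (ctx.fspan (Facc ∪ F)) (vec ++ [x])))

/-- Player II has a strategy in the asymptotic game `F^β_X` to play an outcome in `S`. -/
noncomputable def IIStratF (X : Set 𝒲) (β : Ordinal) (S : Set (List 𝒲)) : Prop :=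
  (β = 0 → ([] : List 𝒲) ∈ S) ∧ (β ≠ 0 → ctx.IIWinsF X S β (ctx.fspan ∅) [])

/-- Game values of the asymptotic game `F^β_X` for player I (who plays the integers and
the ordinals, trying to steer the outcome into `S`). -/
noncomputable def IWinsF (X : Set 𝒲) (S : Set (List 𝒲)) :
    Ordinal → Set 𝒲 → List 𝒲 → Prop :=
  WellFounded.fix (C := fun _ : Ordinal => Set 𝒲 → List 𝒲 → Prop) Ordinal.lt_wf
    (fun β ih Facc vec =>
      ∃ n : ℕ, ∃ ξ : Ordinal, ∃ hξ : ξ < β,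
        ∀ F : Set 𝒲, ctx.IsFinDimIn F X → ctx.NatLt n F →
        ∀ x : 𝒲, x ≠ 0 → x ∈ ctx.fspan (Facc ∪ F) →
          (ξ = 0 → vec ++ [x] ∈ S) ∧
          (ξ ≠ 0 → ih ξ hξ (ctx.fspan (Facc ∪ F)) (vec ++ [x])))

/-- Player I has a strategy in the asymptotic game `F^β_X` to play an outcome in `S`. -/
noncomputable def IStratF (X : Set 𝒲) (β : Ordinal) (S : Set (List 𝒲)) : Prop :=
  (β = 0 → ([] : List 𝒲) ∈ S) ∧ (β ≠ 0 → ctx.IWinsF X S β (ctx.fspan ∅) [])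

/-- Game values of the Gowers game `G^α_X` for player II. -/
noncomputable def IIWinsG (X : Set 𝒲) (S : Set (List 𝒲)) :
    Ordinal → Set 𝒲 → List 𝒲 → Prop :=
  WellFounded.fix (C := fun _ : Ordinal => Set 𝒲 → List 𝒲 → Prop) Ordinal.lt_wf
    (fun α ih Facc vec =>
      ∀ Y : Set 𝒲, ctx.IsBlockSubspaceOf Y X →
      ∀ ξ : Ordinal, ∀ hξ : ξ < α,
        ∃ F : Set 𝒲, ctx.IsFinDimIn F Y ∧
          ∃ x : 𝒲, x ≠ 0 ∧ x ∈ ctx.fspan (Facc ∪ F) ∧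
            (ξ = 0 → vec ++ [x] ∈ S) ∧
            (ξ ≠ 0 → ih ξ hξ (ctx.fspan (Facc ∪ F)) (vec ++ [x])))

/-- Player II has a strategy in the generalised Gowers game `G^α_X` to play in `S`. -/
noncomputable def IIStratG (X : Set 𝒲) (α : Ordinal) (S : Set (List 𝒲)) : Prop :=
  (α = 0 → ([] : List 𝒲) ∈ S) ∧ (α ≠ 0 → ctx.IIWinsG X S α (ctx.fspan ∅) [])

/-- Game values of the adversarial game `A^α_X` for player II (who plays the integers,
the finite-dimensional subspaces `F_l ⊆ Y_l` and the vectors `y_l`). -/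
noncomputable def IIWinsA (X : Set 𝒲) (S : Set (List 𝒲)) :
    Ordinal → Set 𝒲 → Set 𝒲 → List 𝒲 → Prop :=
  WellFounded.fix (C := fun _ : Ordinal => Set 𝒲 → Set 𝒲 → List 𝒲 → Prop)
    Ordinal.lt_wf
    (fun α ih Eacc Facc vec =>
      ∃ n : ℕ,
        ∀ E : Set 𝒲, ctx.IsFinDimIn E X → ctx.NatLt n E →
        ∀ x : 𝒲, x ≠ 0 → x ∈ ctx.fspan (Eacc ∪ E) →
        ∀ Y : Set 𝒲, ctx.IsBlockSubspaceOf Y X →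
        ∀ ξ : Ordinal, ∀ hξ : ξ < α,
          ∃ F : Set 𝒲, ctx.IsFinDimIn F Y ∧
            ∃ y : 𝒲, y ≠ 0 ∧ y ∈ ctx.fspan (Facc ∪ F) ∧
              (ξ = 0 → vec ++ [x, y] ∈ S) ∧
              (ξ ≠ 0 → ih ξ hξ (ctx.fspan (Eacc ∪ E)) (ctx.fspan (Facc ∪ F))
                (vec ++ [x, y])))

/-- Player II has a strategy in the adversarial game `A^α_X` to play in `S`. -/
noncomputable def IIStratA (X : Set 𝒲) (α : Ordinal) (S : Set (List 𝒲)) : Prop :=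
  (α = 0 → ([] : List 𝒲) ∈ S) ∧
  (α ≠ 0 → ctx.IIWinsA X S α (ctx.fspan ∅) (ctx.fspan ∅) [])

/-- Game values of the adversarial game `B^α_X` for player I (who plays the
finite-dimensional subspaces `E_l ⊆ Y_l`, the vectors `x_l`, the integers and the
ordinals). -/
noncomputable def IWinsB (X : Set 𝒲) (S : Set (List 𝒲)) :
    Ordinal → Set 𝒲 → Set 𝒲 → List 𝒲 → Prop :=
  WellFounded.fix (C := fun _ : Ordinal => Set 𝒲 → Set 𝒲 → List 𝒲 → Prop)
    Ordinal.lt_wf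
    (fun α ih Eacc Facc vec =>
      ∀ Y : Set 𝒲, ctx.IsBlockSubspaceOf Y X →
        ∃ E : Set 𝒲, ctx.IsFinDimIn E Y ∧
          ∃ x : 𝒲, x ≠ 0 ∧ x ∈ ctx.fspan (Eacc ∪ E) ∧
            ∃ n : ℕ, ∃ ξ : Ordinal, ∃ hξ : ξ < α,
              ∀ F : Set 𝒲, ctx.IsFinDimIn F X → ctx.NatLt n F →
              ∀ y : 𝒲, y ≠ 0 → y ∈ ctx.fspan (Facc ∪ F) →
                (ξ = 0 → vec ++ [x, y] ∈ S) ∧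
                (ξ ≠ 0 → ih ξ hξ (ctx.fspan (Eacc ∪ E)) (ctx.fspan (Facc ∪ F))
                  (vec ++ [x, y])))

/-- Player I has a strategy in the adversarial game `B^α_X` to play in `S`. -/
noncomputable def IStratB (X : Set 𝒲) (α : Ordinal) (S : Set (List 𝒲)) : Prop :=
  (α = 0 → ([] : List 𝒲) ∈ S) ∧
  (α ≠ 0 → ctx.IWinsB X S α (ctx.fspan ∅) (ctx.fspan ∅) [])

/-- Game values of the adversarial game `B^α_X` for player II (who plays the block
subspaces `Y_l`, the finite-dimensional subspaces `F_l` and the vectors `y_l`). -/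
noncomputable def IIWinsB (X : Set 𝒲) (S : Set (List 𝒲)) :
    Ordinal → Set 𝒲 → Set 𝒲 → List 𝒲 → Prop :=
  WellFounded.fix (C := fun _ : Ordinal => Set 𝒲 → Set 𝒲 → List 𝒲 → Prop)
    Ordinal.lt_wf
    (fun α ih Eacc Facc vec =>
      ∃ Y : Set 𝒲, ctx.IsBlockSubspaceOf Y X ∧
        ∀ E : Set 𝒲, ctx.IsFinDimIn E Y →
        ∀ x : 𝒲, x ≠ 0 → x ∈ ctx.fspan (Eacc ∪ E) →
        ∀ n : ℕ, ∀ ξ : Ordinal, ∀ hξ : ξ < α,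
          ∃ F : Set 𝒲, ctx.IsFinDimIn F X ∧ ctx.NatLt n F ∧
            ∃ y : 𝒲, y ≠ 0 ∧ y ∈ ctx.fspan (Facc ∪ F) ∧
              (ξ = 0 → vec ++ [x, y] ∈ S) ∧
              (ξ ≠ 0 → ih ξ hξ (ctx.fspan (Eacc ∪ E)) (ctx.fspan (Facc ∪ F))
                (vec ++ [x, y])))

/-- Player II has a strategy in the adversarial game `B^α_X` to play in `S`. -/
noncomputable def IIStratB (X : Set 𝒲) (α : Ordinal) (S : Set (List 𝒲)) : Prop :=
  (α = 0 → ([] : List 𝒲) ∈ S) ∧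
  (α ≠ 0 → ctx.IIWinsB X S α (ctx.fspan ∅) (ctx.fspan ∅) [])

end Frame

end Rosendal

namespace Rosendal

theorem schauder_aux {𝒲 : Type} [NormedAddCommGroup 𝒲] [NormedSpace ℝ 𝒲] (e : ℕ → 𝒲) [CompleteSpace 𝒲] (he : IsSchauderBasis e) :
    ∃ φ : ℕ → 𝒲 →ₗ[ℝ] ℝ, (∀ i j, φ i (e j) = if i = j then 1 else 0) ∧
      ∃ C : ℝ, 1 ≤ C ∧ ∀ N x, ‖∑ i ∈ Finset.range N, φ i x • e i‖ ≤ C * ‖x‖ := by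
  choose a ha hu using he
  have hadd : ∀ x y, a (x + y) = a x + a y := by
    intro x y
    refine (hu _ _ ?_).symm
    have := (ha x).add (ha y)
    simp only [← Finset.sum_add_distrib, ← add_smul] at this
    exact this
  have hsmul : ∀ (c : ℝ) x, a (c • x) = c • a x := by
    intro c x
    refine (hu _ _ ?_).symm
    have := (ha x).const_smul c
    simp only [Finset.smul_sum, smul_smul] at this
    exact this
  have hbasis : ∀ j, a (e j) = Pi.single j 1 := by
    intro j
    refine (hu _ _ ?_).symm
    refine tendsto_const_nhds.congr' ?_
    filter_upwards [eventually_gt_atTop j] with N hN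
    rw [Finset.sum_eq_single j]
    · simp
    · intro b _ hb
      simp [hb]
    · intro h
      simp at h
      omega
  let φ : ℕ → 𝒲 →ₗ[ℝ] ℝ := fun i =>
    { toFun := fun x => a x i
      map_add' := fun x y => by simp [hadd]
      map_smul' := fun c x => by simp [hsmul] }
  refine ⟨φ, ?_, ?_⟩
  · intro i j
    change a (e j) i = _
    rw [hbasis, Pi.single_apply]
  let ev : OnePoint ℕ → C(OnePoint ℕ, 𝒲) →L[ℝ] 𝒲 := fun t => ContinuousMap.evalCLM ℝ t
  let E : Submodule ℝ C(OnePoint ℕ, 𝒲) :=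
    (ev ((0 : ℕ) : OnePoint ℕ)).ker ⊓
      ⨅ n : ℕ, (Submodule.span ℝ {e n}).comap
        (ev ((n + 1 : ℕ) : OnePoint ℕ) - ev ((n : ℕ) : OnePoint ℕ)).toLinearMap
  have hEmem : ∀ f : C(OnePoint ℕ, 𝒲), f ∈ E ↔ f ((0 : ℕ) : OnePoint ℕ) = 0 ∧
      ∀ n : ℕ, f ((n + 1 : ℕ) : OnePoint ℕ) - f ((n : ℕ) : OnePoint ℕ) ∈
        Submodule.span ℝ {e n} := by
    intro f
    simp only [E, Submodule.mem_inf, Submodule.mem_iInf, Submodule.mem_comap]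
    rfl
  have hEc : IsClosed (E : Set C(OnePoint ℕ, 𝒲)) := by
    have : (E : Set C(OnePoint ℕ, 𝒲)) = {f | f ((0 : ℕ) : OnePoint ℕ) = 0} ∩
        ⋂ n : ℕ, {f | f ((n + 1 : ℕ) : OnePoint ℕ) - f ((n : ℕ) : OnePoint ℕ) ∈
        Submodule.span ℝ {e n}} := by
      ext f
      simp [hEmem]
    rw [this]
    refine IsClosed.inter ?_ (isClosed_iInter fun n => ?_)
    · exact isClosed_singleton.preimage (ev _).continuous
    · exact (Submodule.closed_of_finiteDimensional (Submodule.span ℝ {e n})).preimage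
        ((ev _).continuous.sub (ev _).continuous)
  have : CompleteSpace E := hEc.completeSpace_coe
  let T : E →L[ℝ] 𝒲 := (ev OnePoint.infty).comp E.subtypeL
  have hT : ∀ f : E, T f = f.1 OnePoint.infty := fun f => rfl
  have hker : T.ker = ⊥ := by
    rw [LinearMap.ker_eq_bot']
    rintro ⟨f, hf⟩ h0
    have h0 : f OnePoint.infty = 0 := h0
    obtain ⟨hf0, hfn⟩ := (hEmem f).1 hf
    simp only [Submodule.mem_span_singleton] at hfn
    choose b hb using hfn
    have hs : ∀ N : ℕ, f (N : OnePoint ℕ) = ∑ i ∈ Finset.range N, b i • e i := by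
      intro N
      induction N with
      | zero => simpa using hf0
      | succ k ih => rw [Finset.sum_range_succ, ← ih, hb]; abel
    have ht : Tendsto (fun N => ∑ i ∈ Finset.range N, b i • e i) atTop (𝓝 0) := by
      have := (OnePoint.continuous_iff_from_nat f).1 f.continuous
      rw [h0] at this
      exact this.congr hs
    have hb0 : b = a 0 := hu _ _ ht
    have ha0 : a 0 = 0 := by simpa using hsmul 0 0
    have : f = 0 := by
      ext t
      induction t using OnePoint.rec with
      | infty => simpa using h0
      | coe N => rw [hs, hb0, ha0]; simp
    simpa using this
  have hmk : ∀ x, ∃ f : E, f.1 OnePoint.infty = x ∧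
      ∀ N : ℕ, f.1 (N : OnePoint ℕ) = ∑ i ∈ Finset.range N, a x i • e i := by
    intro x
    refine ⟨⟨OnePoint.continuousMapMkNat _ x (ha x), (hEmem _).2 ⟨?_, fun n => ?_⟩⟩, ?_, ?_⟩
    · change ∑ i ∈ Finset.range 0, a x i • e i = 0
      simp
    · change ∑ i ∈ Finset.range (n + 1), a x i • e i - ∑ i ∈ Finset.range n, a x i • e i ∈ _
      rw [Finset.sum_range_succ, add_sub_cancel_left]
      exact Submodule.smul_mem _ _ (Submodule.mem_span_singleton_self _)
    · rfl
    · intro N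
      rfl
  have hrange : T.range = ⊤ := by
    rw [LinearMap.range_eq_top]
    intro x
    obtain ⟨f, hf, -⟩ := hmk x
    exact ⟨f, hf⟩
  let Te := ContinuousLinearEquiv.ofBijective T hker hrange
  refine ⟨max 1 ‖(Te.symm : 𝒲 →L[ℝ] E)‖, le_max_left _ _, fun N x => ?_⟩
  obtain ⟨f, hf, hfN⟩ := hmk x
  have h1 : Te.symm x = f := by
    rw [ContinuousLinearEquiv.symm_apply_eq]
    exact hf.symm
  have h2 : ‖f‖ ≤ ‖(Te.symm : 𝒲 →L[ℝ] E)‖ * ‖x‖ := by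
    rw [← h1]
    exact (Te.symm : 𝒲 →L[ℝ] E).le_opNorm x
  have h3 : ‖∑ i ∈ Finset.range N, a x i • e i‖ ≤ ‖f‖ := by
    rw [← hfN]
    exact f.1.norm_coe_le_norm _
  refine (h3.trans h2).trans ?_
  gcongr
  exact le_max_right _ _

namespace Frame

theorem fspan_eq {𝒲 : Type} [NormedAddCommGroup 𝒲] [NormedSpace ℝ 𝒲] (ctx : Frame 𝒲)
    (S : Set 𝒲) : ctx.fspan S = (Submodule.span ctx.𝔽 S : Set 𝒲) := by
  ext v
  constructor
  · rintro ⟨t, ht, c, hc, rfl⟩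
    refine Submodule.sum_mem _ fun w hw => ?_
    exact Submodule.smul_mem _ (⟨c w, hc w⟩ : ctx.𝔽) (Submodule.subset_span (ht hw))
  · intro hv
    obtain ⟨c, hc, rfl⟩ := Submodule.mem_span_set.1 hv
    exact ⟨c.support, hc, fun w => (c w : ℝ), fun w => (c w).2, rfl⟩

theorem mem_fspan_range {𝒲 : Type} [NormedAddCommGroup 𝒲] [NormedSpace ℝ 𝒲] (ctx : Frame 𝒲)
    (b : ℕ → 𝒲) {x : 𝒲} (hx : x ∈ ctx.fspan (Set.range b)) :
    ∃ (c : ℕ → ℝ) (s : Finset ℕ), (∀ i, c i ∈ ctx.𝔽) ∧ x = ∑ i ∈ s, c i • b i := by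
  rw [fspan_eq] at hx
  obtain ⟨c, rfl⟩ := Finsupp.mem_span_range_iff_exists_finsupp.1 hx
  exact ⟨fun i => (c i : ℝ), c.support, fun i => (c i).2, rfl⟩

theorem IIWinsF_iff {𝒲 : Type} [NormedAddCommGroup 𝒲] [NormedSpace ℝ 𝒲] (ctx : Frame 𝒲)
    (X : Set 𝒲) (S : Set (List 𝒲)) (β : Ordinal) (Facc : Set 𝒲) (vec : List 𝒲) :
    ctx.IIWinsF X S β Facc vec ↔ ∀ n : ℕ, ∀ ξ : Ordinal, ξ < β →
        ∃ F : Set 𝒲, ctx.IsFinDimIn F X ∧ ctx.NatLt n F ∧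
          ∃ x : 𝒲, x ≠ 0 ∧ x ∈ ctx.fspan (Facc ∪ F) ∧
            (ξ = 0 → vec ++ [x] ∈ S) ∧
            (ξ ≠ 0 → ctx.IIWinsF X S ξ (ctx.fspan (Facc ∪ F)) (vec ++ [x])) := by
  unfold IIWinsF
  rw [WellFounded.fix_eq]

theorem IIWinsF_mono {𝒲 : Type} [NormedAddCommGroup 𝒲] [NormedSpace ℝ 𝒲] (ctx : Frame 𝒲)
    (X X' : Set 𝒲) (S S' : Set (List 𝒲)) (hS : S ⊆ S') (M : ℕ)
    (hM : ∀ F, ctx.IsFinDimIn F X → ctx.NatLt M F → F ⊆ X') (β : Ordinal) :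
    ∀ (Facc : Set 𝒲) (vec : List 𝒲), ctx.IIWinsF X S β Facc vec →
      ctx.IIWinsF X' S' β Facc vec := by
  induction β using WellFoundedLT.induction with
  | ind β ih =>
    intro Facc vec h
    rw [IIWinsF_iff] at h ⊢
    intro n ξ hξ
    obtain ⟨F, hF, hn, x, hx0, hx, h1, h2⟩ := h (max n M) ξ hξ
    have hFX : F ⊆ X' := hM F hF fun x hx => by
      obtain ⟨s, hs, hi⟩ := hn x hx
      exact ⟨s, hs, fun i his => (le_max_right n M).trans_lt (hi i his)⟩
    refine ⟨F, ?_, ?_, x, hx0, hx, fun h => hS (h1 h), fun h => ih ξ hξ _ _ (h2 h)⟩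
    · obtain ⟨t, ht, rfl⟩ := hF
      refine ⟨t, Set.Subset.trans ?_ hFX, rfl⟩
      rw [fspan_eq]
      exact Submodule.subset_span
    · intro x hx
      obtain ⟨s, hs, hi⟩ := hn x hx
      exact ⟨s, hs, fun i his => (le_max_left n M).trans_lt (hi i his)⟩

theorem norm_mem' {𝒲 : Type} [NormedAddCommGroup 𝒲] [NormedSpace ℝ 𝒲] (ctx : Frame 𝒲)
    {x : 𝒲} (hx : x ∈ ctx.W) : ‖x‖ ∈ ctx.𝔽 := by
  obtain ⟨c, s, hc, rfl⟩ := ctx.mem_fspan_range _ hx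
  exact ctx.norm_mem s c fun i _ => hc i

theorem block_exists {𝒲 : Type} [NormedAddCommGroup 𝒲] [NormedSpace ℝ 𝒲] (ctx : Frame 𝒲)
    {y : ℕ → 𝒲} (hy : ctx.IsBlockSeq y) :
    ∃ p : ℕ → ℕ, StrictMono p ∧ ∀ n, SuppIn ctx.e (y n) (Finset.Ico (p n) (p (n + 1))) := by
  obtain ⟨-, h0, D, hD, hlt⟩ := hy
  have hne : ∀ n, (D n).Nonempty := by
    intro n
    rw [Finset.nonempty_iff_ne_empty]
    intro h
    obtain ⟨a, ha⟩ := hD n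
    rw [h] at ha
    exact h0 n (by simpa using ha)
  let p : ℕ → ℕ := fun n => match n with
    | 0 => 0
    | n + 1 => (D n).max' (hne n) + 1
  have hp : ∀ n, D n ⊆ Finset.Ico (p n) (p (n + 1)) := by
    intro n i hi
    rw [Finset.mem_Ico]
    refine ⟨?_, Nat.lt_succ_of_le ((D n).le_max' i hi)⟩
    cases n with
    | zero => exact Nat.zero_le _
    | succ k => exact hlt k _ ((D k).max'_mem (hne k)) i hi
  refine ⟨p, strictMono_nat_of_lt_succ fun n => ?_, fun n => ?_⟩
  · obtain ⟨i, hi⟩ := hne n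
    have := Finset.mem_Ico.1 (hp n hi)
    omega
  · obtain ⟨a, ha⟩ := hD n
    refine ⟨fun i => if i ∈ D n then a i else 0, ?_⟩
    rw [ha]
    refine Finset.sum_subset_zero_on_sdiff (hp n) ?_ ?_
    · intro i hi
      simp [(Finset.mem_sdiff.1 hi).2]
    · intro i hi
      simp [hi]

end Frame

section coords

theorem chain_aux {u v w K c κ : ℝ} (hK : 0 ≤ K) (hw : 0 ≤ w) (h1 : u ≤ K * v)
    (h2 : v ≤ c * w) (h3 : K * c ≤ κ) : u ≤ κ * w := by
  have h4 := mul_le_mul_of_nonneg_left h2 hK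
  have h5 := mul_le_mul_of_nonneg_right h3 hw
  linarith

theorem suppIn_coord {𝒲 : Type} [NormedAddCommGroup 𝒲] [NormedSpace ℝ 𝒲] {e : ℕ → 𝒲}
    {φ : ℕ → 𝒲 →ₗ[ℝ] ℝ} (hφ : ∀ i j, φ i (e j) = if i = j then 1 else 0)
    {x : 𝒲} {s : Finset ℕ} (hx : SuppIn e x s) :
    (∀ i, i ∉ s → φ i x = 0) ∧ x = ∑ i ∈ s, φ i x • e i := by
  obtain ⟨a, ha⟩ := hx
  have h : ∀ i, φ i x = if i ∈ s then a i else 0 := by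
    intro i
    rw [ha]
    simp [hφ]
  refine ⟨fun i hi => by simp [h, hi], ?_⟩
  conv_lhs => rw [ha]
  refine Finset.sum_congr rfl fun i hi => ?_
  simp [h, hi]

theorem partial_bound {𝒲 : Type} [NormedAddCommGroup 𝒲] [NormedSpace ℝ 𝒲] {e : ℕ → 𝒲}
    {φ : ℕ → 𝒲 →ₗ[ℝ] ℝ} (hφ : ∀ i j, φ i (e j) = if i = j then 1 else 0)
    {C : ℝ} (hC : ∀ N x, ‖∑ i ∈ Finset.range N, φ i x • e i‖ ≤ C * ‖x‖)
    {y : ℕ → 𝒲} {p : ℕ → ℕ} (hp : StrictMono p)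
    (hy : ∀ n, SuppIn e (y n) (Finset.Ico (p n) (p (n + 1)))) (a : ℕ → ℝ) {m k : ℕ}
    (hmk : m ≤ k) :
    ‖∑ i ∈ Finset.range m, a i • y i‖ ≤ C * ‖∑ i ∈ Finset.range k, a i • y i‖ := by
  refine le_trans (le_of_eq ?_) (hC (p m) _)
  congr 1
  have hP : ∀ i, ∑ j ∈ Finset.range (p m), φ j (y i) • e j = if i < m then y i else 0 := by
    intro i
    obtain ⟨h0, h1⟩ := suppIn_coord hφ (hy i)
    split_ifs with him
    · conv_rhs => rw [h1]
      symm
      refine Finset.sum_subset ?_ ?_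
      · intro j hj
        have := hp.monotone (show i + 1 ≤ m by omega)
        rw [Finset.mem_Ico] at hj
        rw [Finset.mem_range]
        omega
      · intro j _ hj
        rw [h0 j hj, zero_smul]
    · refine Finset.sum_eq_zero fun j hj => ?_
      have := hp.monotone (show m ≤ i by omega)
      rw [Finset.mem_range] at hj
      rw [h0 j (by rw [Finset.mem_Ico]; omega), zero_smul]
  simp only [map_sum, map_smul, smul_eq_mul, Finset.sum_smul, ← smul_smul]
  rw [Finset.sum_comm]
  simp only [← Finset.smul_sum, hP]
  refine Finset.sum_subset_zero_on_sdiff (Finset.range_mono hmk) ?_ ?_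
  · intro i hi
    have := (Finset.mem_sdiff.1 hi).2
    rw [Finset.mem_range] at this
    simp [this]
  · intro i hi
    rw [Finset.mem_range] at hi
    simp [hi]

theorem perturb {𝒲 : Type} [NormedAddCommGroup 𝒲] [NormedSpace ℝ 𝒲] {e : ℕ → 𝒲}
    {φ : ℕ → 𝒲 →ₗ[ℝ] ℝ} (hφ : ∀ i j, φ i (e j) = if i = j then 1 else 0)
    {C : ℝ} (hC1 : 1 ≤ C) (hC : ∀ N x, ‖∑ i ∈ Finset.range N, φ i x • e i‖ ≤ C * ‖x‖)
    {y y' : ℕ → 𝒲} {p : ℕ → ℕ} (hp : StrictMono p)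
    (hy' : ∀ n, SuppIn e (y' n) (Finset.Ico (p n) (p (n + 1)))) (m : ℕ)
    (hnorm : ∀ i < m, ‖y i‖ = ‖y' i‖) (heq : ∀ i, m ≤ i → y i = y' i) (a : ℕ → ℝ) (k : ℕ) :
    ‖∑ i ∈ Finset.range k, a i • y i‖ ≤
      (2 * C * m + 1 + C) * ‖∑ i ∈ Finset.range k, a i • y' i‖ := by
  have hb := fun {m k : ℕ} (h : m ≤ k) => partial_bound hφ hC hp hy' a h
  set S' := ∑ i ∈ Finset.range k, a i • y' i with hS'
  have hm' : min m k ≤ k := min_le_right _ _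
  have hsplit : ∀ f : ℕ → 𝒲, ∑ i ∈ Finset.range k, f i =
      ∑ i ∈ Finset.range (min m k), f i + ∑ i ∈ Finset.Ico (min m k) k, f i :=
    fun f => (Finset.sum_range_add_sum_Ico f hm').symm
  have hT : ∑ i ∈ Finset.Ico (min m k) k, a i • y i =
      S' - ∑ i ∈ Finset.range (min m k), a i • y' i := by
    rw [hS', hsplit, add_sub_cancel_left]
    refine Finset.sum_congr rfl fun i hi => ?_
    rw [Finset.mem_Ico] at hi
    rw [heq i (by omega)]
  have hterm : ∀ i ∈ Finset.range (min m k), ‖a i • y i‖ ≤ 2 * C * ‖S'‖ := by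
    intro i hi
    rw [Finset.mem_range] at hi
    have h1 : ‖a i • y i‖ = ‖a i • y' i‖ := by
      rw [norm_smul, norm_smul, hnorm i (by omega)]
    have h2 : a i • y' i = ∑ j ∈ Finset.range (i + 1), a j • y' j -
        ∑ j ∈ Finset.range i, a j • y' j := by
      rw [Finset.sum_range_succ, add_sub_cancel_left]
    rw [h1, h2]
    have h3 := hb (show i + 1 ≤ k by omega)
    have h4 := hb (show i ≤ k by omega)
    have := norm_sub_le (∑ j ∈ Finset.range (i + 1), a j • y' j)
      (∑ j ∈ Finset.range i, a j • y' j)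
    linarith
  have hH : ‖∑ i ∈ Finset.range (min m k), a i • y i‖ ≤ m * (2 * C * ‖S'‖) := by
    refine (norm_sum_le_of_le _ hterm).trans ?_
    rw [Finset.sum_const, Finset.card_range, nsmul_eq_mul]
    have : 0 ≤ 2 * C * ‖S'‖ := by positivity
    gcongr
    exact min_le_left _ _
  rw [hsplit, hT]
  have h5 := hb hm'
  have h6 := norm_sub_le S' (∑ i ∈ Finset.range (min m k), a i • y' i)
  refine (norm_add_le _ _).trans ?_
  linarith

theorem Frame.tail_mem {𝒲 : Type} [NormedAddCommGroup 𝒲] [NormedSpace ℝ 𝒲] (ctx : Frame 𝒲)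
    {ψ : ℕ → 𝒲 →ₗ[ℝ] ℝ} {z : ℕ → 𝒲} (h1 : ∀ j, ψ j (z j) ≠ 0)
    (h2 : ∀ i j, i ≠ j → ψ i (z j) = 0) {x : 𝒲} (hx : x ∈ ctx.fspan (Set.range z)) {n : ℕ}
    (hn : ∀ j < n, ψ j x = 0) :
    x ∈ ctx.fspan (z '' Set.Ici n) ∧ (x ≠ 0 → ∃ j, n ≤ j ∧ ψ j x ≠ 0) := by
  obtain ⟨c, s, hc, hxc⟩ := ctx.mem_fspan_range _ hx
  have hψ : ∀ j ∈ s, ψ j x = c j * ψ j (z j) := by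
    intro j hj
    rw [hxc, map_sum, Finset.sum_eq_single j]
    · simp
    · intro i _ hij
      simp [h2 j i (Ne.symm hij)]
    · intro h
      exact absurd hj h
  have hc0 : ∀ j ∈ s, ψ j x = 0 → c j = 0 := by
    intro j hj h
    rw [hψ j hj] at h
    exact (mul_eq_zero.1 h).resolve_right (h1 j)
  constructor
  · rw [ctx.fspan_eq, hxc]
    refine Submodule.sum_mem _ fun j hj => ?_
    by_cases hjn : j < n
    · rw [hc0 j hj (hn j hjn), zero_smul]
      exact Submodule.zero_mem _
    · exact Submodule.smul_mem _ (⟨c j, hc j⟩ : ctx.𝔽)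
        (Submodule.subset_span ⟨j, not_lt.1 hjn, rfl⟩)
  · intro hx0
    by_contra hcon
    push Not at hcon
    apply hx0
    rw [hxc]
    refine Finset.sum_eq_zero fun j hj => ?_
    have : ψ j x = 0 := by
      by_cases hjn : j < n
      · exact hn j hjn
      · exact hcon j (not_lt.1 hjn)
    rw [hc0 j hj this, zero_smul]

end coords

/-- uniformity lemma.  If for every block subspace `X ⊆ W` there are
`K ≥ 1` and a block sequence `(y n)` in `X` such that II has a strategy in `F^β_X` to play
outcomes `K`-equivalent to `(y n)`, then the constant `K` can be chosen uniformly on all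
block subspaces of some block subspace `Y ⊆ W`. -/
theorem uniformity
    (𝒲 : Type) [NormedAddCommGroup 𝒲] [NormedSpace ℝ 𝒲] (ctx : Frame 𝒲)
    (β : Ordinal) (hβ : β < (Cardinal.aleph 1).ord)
    (h : ∀ X : Set 𝒲, ctx.IsBlockSubspace X →
      ∃ K : ℝ, 1 ≤ K ∧ ∃ y : ℕ → 𝒲, ctx.IsBlockSeq y ∧ (∀ n, y n ∈ X) ∧
        ctx.IIStratF X β {l | OutcomeEquiv K l y}) :
    ∃ K : ℝ, 1 ≤ K ∧ ∃ Y : Set 𝒲, ctx.IsBlockSubspace Y ∧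
      ∀ X : Set 𝒲, ctx.IsBlockSubspaceOf X Y →
        ∃ y : ℕ → 𝒲, ctx.IsBlockSeq y ∧ (∀ n, y n ∈ X) ∧
          ctx.IIStratF X β {l | OutcomeEquiv K l y} := by
  classical
  by_contra hcon
  push Not at hcon
  have hcomp := ctx.complete
  obtain ⟨φ, hφ, C, hC1, hC⟩ := schauder_aux ctx.e ctx.basis
  have hW : ctx.W = (Submodule.span ctx.𝔽 (Set.range ctx.e) : Set 𝒲) := ctx.fspan_eq _
  let κ : ℕ → ℝ := fun n => (n + 1) * (2 * C * n + 1 + C)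
  have hc1 : ∀ n : ℕ, 1 ≤ 2 * C * n + 1 + C := by
    intro n
    have : 0 ≤ 2 * C * n := by positivity
    linarith
  have hκ1 : ∀ n, 1 ≤ κ n := by
    intro n
    have h1 := hc1 n
    have h2 : (1 : ℝ) ≤ n + 1 := by
      have : (0 : ℝ) ≤ n := by positivity
      linarith
    simp only [κ]
    nlinarith
  -- one step of the construction
  have step : ∀ (n : ℕ) (y : {y : ℕ → 𝒲 // ctx.IsBlockSeq y}), ∃ b : {y : ℕ → 𝒲 // ctx.IsBlockSeq y},
      (∀ m, b.1 m ∈ ctx.fspan (Set.range y.1)) ∧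
      ∀ v : ℕ → 𝒲, ctx.IsBlockSeq v → (∀ m, v m ∈ ctx.fspan (Set.range b.1)) →
        ¬ ctx.IIStratF (ctx.fspan (Set.range b.1)) β {l | OutcomeEquiv (κ n) l v} := by
    rintro n ⟨y, hy⟩
    obtain ⟨X, ⟨b, hb, hbY, rfl⟩, hX⟩ := hcon (κ n) (hκ1 n) (ctx.fspan (Set.range y))
      ⟨y, hy, hy.1, rfl⟩
    exact ⟨⟨b, hb⟩, hbY, hX⟩
  choose nxt hnxt1 hnxt2 using step
  have he : ctx.IsBlockSeq ctx.e := by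
    refine ⟨fun n => ?_, fun n h0 => ?_, fun n => {n}, fun n => ⟨fun _ => 1, by simp⟩, ?_⟩
    · rw [ctx.fspan_eq]
      exact Submodule.subset_span ⟨n, rfl⟩
    · have := hφ n n
      rw [h0] at this
      simp at this
    · intro n i hi j hj
      simp at hi hj
      omega
  let B : ℕ → {y : ℕ → 𝒲 // ctx.IsBlockSeq y} := fun n => Nat.rec ⟨ctx.e, he⟩ (fun n y => nxt n y) n
  have hB : ∀ n, B (n + 1) = nxt n (B n) := fun n => rfl
  let b : ℕ → ℕ → 𝒲 := fun n => (B (n + 1)).1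
  have hbb : ∀ n, ctx.IsBlockSeq (b n) := fun n => (B (n + 1)).2
  have hbs : ∀ n m, b (n + 1) m ∈ ctx.fspan (Set.range (b n)) := fun n m => hnxt1 (n + 1) (B (n + 1)) m
  have hbad : ∀ n, ∀ v : ℕ → 𝒲, ctx.IsBlockSeq v → (∀ m, v m ∈ ctx.fspan (Set.range (b n))) →
        ¬ ctx.IIStratF (ctx.fspan (Set.range (b n))) β {l | OutcomeEquiv (κ n) l v} :=
    fun n => hnxt2 n (B n)
  let Y : ℕ → Submodule ctx.𝔽 𝒲 := fun n => Submodule.span ctx.𝔽 (Set.range (b n))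
  have hYanti : Antitone Y := by
    refine antitone_nat_of_succ_le fun n => Submodule.span_le.2 ?_
    rintro _ ⟨m, rfl⟩
    have := hbs n m
    rwa [ctx.fspan_eq] at this
  choose p hpm hps using fun n => ctx.block_exists (hbb n)
  -- the diagonal sequence
  let k : ℕ → ℕ := fun n => Nat.rec 0 (fun n kn => max (n + 1) (p n (kn + 1))) n
  have hk : ∀ n, k (n + 1) = max (n + 1) (p n (k n + 1)) := fun n => rfl
  have hkn : ∀ n, n ≤ k n := by
    intro n
    cases n with
    | zero => exact Nat.zero_le _
    | succ n => rw [hk]; exact le_max_left _ _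
  let s : ℕ → ℕ := fun n => p n (k n)
  have hs1 : ∀ n, p n (k n + 1) ≤ s (n + 1) := by
    intro n
    have h1 : p n (k n + 1) ≤ k (n + 1) := by rw [hk]; exact le_max_right _ _
    exact h1.trans ((hpm (n + 1)).le_apply)
  have hsm : StrictMono s := strictMono_nat_of_lt_succ fun n =>
    (hpm n (Nat.lt_succ_self _)).trans_le (hs1 n)
  let z : ℕ → 𝒲 := fun n => b n (k n)
  have hz0 : ∀ n, z n ≠ 0 := fun n => (hbb n).2.1 _
  have hzW : ∀ n, z n ∈ ctx.W := fun n => (hbb n).1 _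
  have hzc : ∀ n i, φ i (z n) ≠ 0 → s n ≤ i ∧ i < s (n + 1) := by
    intro n i hi
    have := (suppIn_coord hφ (hps n (k n))).1 i
    have h2 := hs1 n
    by_contra h3
    apply hi
    apply this
    rw [Finset.mem_Ico]
    intro h4
    exact h3 ⟨h4.1, h4.2.trans_le h2⟩
  have hzt : ∀ n, ∃ t, φ t (z n) ≠ 0 := by
    intro n
    by_contra h3
    push Not at h3
    apply hz0 n
    refine (suppIn_coord hφ (hps n (k n))).2.trans ?_
    refine Finset.sum_eq_zero fun i _ => ?_
    have h4 : φ i (b n (k n)) = 0 := h3 i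
    rw [h4, zero_smul]
  choose t ht using hzt
  have htz : ∀ n, s n ≤ t n ∧ t n < s (n + 1) := fun n => hzc n _ (ht n)
  have htm : StrictMono t := strictMono_nat_of_lt_succ fun n => (htz n).2.trans_le (htz (n + 1)).1
  have htij : ∀ i j, i ≠ j → φ (t i) (z j) = 0 := by
    intro i j hij
    by_contra h3
    have h4 := hzc j _ h3
    have h5 := htz i
    rcases lt_or_gt_of_ne hij with h | h
    · have := hsm.monotone (show i + 1 ≤ j by omega)
      omega
    · have := hsm.monotone (show j + 1 ≤ i by omega)
      omega
  have hzB : ctx.IsBlockSeq z := by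
    refine ⟨hzW, hz0, fun n => Finset.Ico (p n (k n)) (p n (k n + 1)), fun n => hps n (k n), ?_⟩
    intro n i hi j hj
    rw [Finset.mem_Ico] at hi hj
    have := hs1 n
    simp only [s] at this
    omega
  have htailY : ∀ n, ctx.fspan (z '' Set.Ici n) ⊆ ctx.fspan (Set.range (b n)) := by
    intro n
    rw [ctx.fspan_eq, ctx.fspan_eq]
    refine Submodule.span_le.2 ?_
    rintro _ ⟨j, hj, rfl⟩
    exact hYanti hj (Submodule.subset_span ⟨k j, rfl⟩)
  obtain ⟨K, hK1, y, hyB, hyZ, hstrat⟩ := h (ctx.fspan (Set.range z)) ⟨z, hzB, hzW, rfl⟩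
  obtain ⟨r, hrm, hrs⟩ := ctx.block_exists hyB
  have hrc : ∀ n i, φ i (y n) ≠ 0 → r n ≤ i ∧ i < r (n + 1) := by
    intro n i hi
    by_contra h3
    apply hi
    apply (suppIn_coord hφ (hrs n)).1 i
    rwa [Finset.mem_Ico]
  have hyc : ∀ n, (∀ j < n, φ (t j) (y n) = 0) := by
    have key : ∀ n, ∀ j < n, t j < r n := by
      intro n
      induction n with
      | zero => intro j hj; omega
      | succ n ih =>
        have h0 : ∀ j < n, φ (t j) (y n) = 0 := by
          intro j hj
          by_contra h3
          have := hrc n _ h3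
          have := ih j hj
          omega
        obtain ⟨j, hj, hj2⟩ := (ctx.tail_mem (ψ := fun j => φ (t j)) ht htij (hyZ n) h0).2
          (hyB.2.1 n)
        have h5 := (hrc n _ hj2).2
        intro i hi
        have := htm.monotone (show i ≤ j by omega)
        omega
    intro n j hj
    by_contra h3
    have := hrc n _ h3
    have := key n j hj
    omega
  have hyT : ∀ n, y n ∈ ctx.fspan (z '' Set.Ici n) := fun n =>
    (ctx.tail_mem (ψ := fun j => φ (t j)) ht htij (hyZ n) (hyc n)).1
  -- choose n
  obtain ⟨n, hn⟩ := exists_nat_ge K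
  have hsupp : ∀ i, n ≤ i → ∀ q < s n, φ q (y i) = 0 := by
    intro i hi q hq
    have : y i ∈ Submodule.span ℝ (z '' Set.Ici n) := by
      have h1 := hyT i
      obtain ⟨T, hT, c, -, hxc⟩ := h1
      rw [hxc]
      refine Submodule.sum_mem _ fun w hw => Submodule.smul_mem _ _ (Submodule.subset_span ?_)
      exact Set.image_mono (Set.Ici_subset_Ici.2 hi) (hT hw)
    have hle : Submodule.span ℝ (z '' Set.Ici n) ≤ LinearMap.ker (φ q) := by
      refine Submodule.span_le.2 ?_
      rintro _ ⟨j, hj, rfl⟩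
      change φ q (z j) = 0
      by_contra h3
      have := hzc j q h3
      have := hsm.monotone (show n ≤ j from hj)
      omega
    exact hle this
  let y' : ℕ → 𝒲 := fun i => if i < n then (‖y i‖ / ‖b n i‖) • b n i else y i
  have hnb : ∀ i, ‖b n i‖ ≠ 0 := fun i => norm_ne_zero_iff.2 ((hbb n).2.1 i)
  have hny : ∀ i, ‖y i‖ ≠ 0 := fun i => norm_ne_zero_iff.2 (hyB.2.1 i)
  have hy'Y : ∀ i, y' i ∈ ctx.fspan (Set.range (b n)) := by
    intro i
    by_cases hi : i < n
    · simp only [y', hi, if_true]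
      rw [ctx.fspan_eq]
      refine Submodule.smul_mem _ (⟨‖y i‖ / ‖b n i‖, ?_⟩ : ctx.𝔽) (Submodule.subset_span ⟨i, rfl⟩)
      exact ctx.𝔽.div_mem (ctx.norm_mem' (hyB.1 i)) (ctx.norm_mem' ((hbb n).1 i))
    · simp only [y', hi, if_false]
      apply htailY n
      have h1 := hyT i
      rw [ctx.fspan_eq] at h1 ⊢
      exact Submodule.span_mono (Set.image_mono (Set.Ici_subset_Ici.2 (not_lt.1 hi))) h1
  have hnorm : ∀ i < n, ‖y i‖ = ‖y' i‖ := by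
    intro i hi
    simp only [y', hi, if_true]
    rw [norm_smul, Real.norm_of_nonneg (by positivity), div_mul_cancel₀ _ (hnb i)]
  have heq : ∀ i, n ≤ i → y i = y' i := by
    intro i hi
    simp [y', not_lt.2 hi]
  have hy'B : ctx.IsBlockSeq y' := by
    refine ⟨fun i => ?_, fun i => ?_, fun i => if i < n then Finset.Ico (p n i) (p n (i + 1)) else
      (Finset.Ico (r i) (r (i + 1))).filter (fun q => s n ≤ q), fun i => ?_, fun i => ?_⟩
    · have h1 := hy'Y i
      rw [ctx.fspan_eq] at h1 ⊢
      refine Submodule.span_le.2 ?_ h1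
      rintro _ ⟨m, rfl⟩
      have := (hbb n).1 m
      rwa [ctx.fspan_eq] at this
    · by_cases hi : i < n
      · rw [← norm_ne_zero_iff, ← hnorm i hi]
        exact hny i
      · rw [← heq i (not_lt.1 hi)]
        exact hyB.2.1 i
    · by_cases hi : i < n
      · simp only [y', hi, if_true]
        obtain ⟨a, ha⟩ := hps n i
        refine ⟨fun q => ‖y i‖ / ‖b n i‖ * a q, ?_⟩
        conv_lhs => rw [ha]
        rw [Finset.smul_sum]
        simp only [smul_smul]
        rw [← ha]
      · simp only [y', hi, if_false]
        refine ⟨fun q => φ q (y i), ?_⟩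
        rw [Finset.sum_filter_of_ne]
        · exact (suppIn_coord hφ (hrs i)).2
        · intro q _ hq
          by_contra h3
          apply hq
          change φ q (y i) • ctx.e q = 0
          rw [hsupp i (not_lt.1 hi) q (not_le.1 h3), zero_smul]
    · intro u hu v hv
      by_cases hi : i + 1 < n
      · have hi' : i < n := by omega
        simp only [hi, hi', if_true, Finset.mem_Ico] at hu hv
        omega
      · by_cases hi' : i < n
        · simp only [hi, hi', if_true, if_false, Finset.mem_Ico, Finset.mem_filter] at hu hv
          have h1 : p n (i + 1) ≤ s n := (hpm n).monotone ((show i + 1 ≤ n by omega).trans (hkn n))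
          omega
        · simp only [hi, hi', if_false, Finset.mem_Ico, Finset.mem_filter] at hu hv
          omega
  obtain ⟨r', hrm', hrs'⟩ := ctx.block_exists hy'B
  have hyy' := perturb hφ hC1 hC hrm' hrs' n hnorm heq
  have hy'y := perturb hφ hC1 hC hrm hrs n (fun i hi => (hnorm i hi).symm) (fun i hi => (heq i hi).symm)
  have hS : {l : List 𝒲 | OutcomeEquiv K l y} ⊆ {l | OutcomeEquiv (κ n) l y'} := by
    intro l hl a
    obtain ⟨h1, h2⟩ := hl a
    have h3 := hyy' a l.length
    have h4 := hy'y a l.length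
    have hK0 : 0 < K := by linarith
    have hc0 := hc1 n
    have hκK : K * (2 * C * n + 1 + C) ≤ κ n := by
      simp only [κ]
      gcongr
      linarith
    have hκ0 : 0 < κ n := by linarith [hκ1 n]
    set c := 2 * C * (n : ℝ) + 1 + C
    constructor
    · rw [one_div, inv_mul_le_iff₀ hK0] at h1
      rw [one_div, inv_mul_le_iff₀ hκ0]
      exact chain_aux hK0.le (norm_nonneg _) h1 h3 hκK
    · exact chain_aux (by linarith) (norm_nonneg _) h4 h2 (by linarith)
  refine hbad n y' hy'B hy'Y ⟨fun h0 => hS (hstrat.1 h0), fun h0 => ?_⟩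
  refine ctx.IIWinsF_mono _ _ _ _ hS (s n) ?_ β _ _ (hstrat.2 h0)
  rintro F ⟨T, hT, rfl⟩ hF x hx
  apply htailY n
  refine (ctx.tail_mem (ψ := fun j => φ (t j)) ht htij ?_ ?_).1
  · rw [ctx.fspan_eq] at hx hT ⊢
    exact Submodule.span_le.2 hT hx
  · intro j hj
    obtain ⟨S, hS, hi⟩ := hF x hx
    refine (suppIn_coord hφ hS).1 _ fun hmem => ?_
    have h1 := hi _ hmem
    have h2 := (htz j).2
    have h3 := hsm.monotone (show j + 1 ≤ n by omega)
    omega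

end Rosendal
end

section
/- Suppose X ⊆ W is a block subspace, (y_0,y_1,…) is a block sequence in X, α < ω₁ and K ≥ 1. Assume that player II has a strategy in F^{ω·α}_X to play outcomes (x_0,…,x_k) satisfying (x_0,…,x_k) ∼_K (y_0,…,y_k). Then II has a strategy in the game B^α_X to play outcomes (u_0,v_0,u_1,v_1,…,u_k,v_k) such that (u_0,…,u_k) ∼_K (v_0,…,v_k). -/
open Filter Topology

namespace Rosendal

section Helpers

variable {𝒲 : Type} [NormedAddCommGroup 𝒲] [NormedSpace ℝ 𝒲] (ctx : Frame 𝒲)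

theorem fspan_eq (S : Set 𝒲) :
    ctx.fspan S = (Submodule.span ctx.𝔽 S : Set 𝒲) := by
  classical
  ext v
  constructor
  · rintro ⟨t, ht, c, hc, rfl⟩
    refine Submodule.sum_mem _ fun w hw => ?_
    exact Submodule.smul_mem _ (⟨c w, hc w⟩ : ctx.𝔽) (Submodule.subset_span (ht hw))
  · intro hv
    rw [SetLike.mem_coe, Submodule.mem_span_iff_exists_finset_subset] at hv
    obtain ⟨f, t, ht, -, rfl⟩ := hv
    exact ⟨t, ht, fun w => (f w : ℝ), fun w => (f w).2, rfl⟩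

theorem natLt_span (n : ℕ) (S : Set 𝒲)
    (h : ∀ x ∈ S, ∃ s : Finset ℕ, SuppIn ctx.e x s ∧ ∀ i ∈ s, n < i) :
    ctx.NatLt n (Submodule.span ctx.𝔽 S : Set 𝒲) := by
  have key : ∀ x, x ∈ Submodule.span ℝ (ctx.e '' Set.Ioi n) ↔
      ∃ s : Finset ℕ, SuppIn ctx.e x s ∧ ∀ i ∈ s, n < i := by
    intro x
    constructor
    · intro hx
      obtain ⟨l, hl, rfl⟩ := (Finsupp.mem_span_image_iff_linearCombination ℝ).1 hx
      refine ⟨l.support, ⟨l, ?_⟩, ?_⟩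
      · rw [Finsupp.linearCombination_apply, Finsupp.sum]
      · intro i hi
        exact (Finsupp.mem_supported ℝ l).1 hl hi
    · rintro ⟨s, ⟨a, rfl⟩, hs⟩
      exact Submodule.sum_mem _ fun i hi =>
        Submodule.smul_mem _ _ (Submodule.subset_span ⟨i, hs i hi, rfl⟩)
  intro x hx
  rw [← key]
  have hle : Submodule.span ctx.𝔽 S ≤
      (Submodule.span ℝ (ctx.e '' Set.Ioi n)).restrictScalars ctx.𝔽 :=
    Submodule.span_le.2 fun z hz => (key z).2 (h z hz)
  exact hle hx

theorem IIWinsF_iff (X : Set 𝒲) (S : Set (List 𝒲)) (β : Ordinal) (G : Set 𝒲) (vec : List 𝒲) :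
    ctx.IIWinsF X S β G vec ↔
      ∀ n : ℕ, ∀ ξ : Ordinal, ξ < β →
        ∃ F : Set 𝒲, ctx.IsFinDimIn F X ∧ ctx.NatLt n F ∧
          ∃ x : 𝒲, x ≠ 0 ∧ x ∈ ctx.fspan (G ∪ F) ∧
            (ξ = 0 → vec ++ [x] ∈ S) ∧
            (ξ ≠ 0 → ctx.IIWinsF X S ξ (ctx.fspan (G ∪ F)) (vec ++ [x])) := by
  unfold Frame.IIWinsF
  rw [WellFounded.fix_eq]

theorem IIWinsB_iff (X : Set 𝒲) (S : Set (List 𝒲)) (α : Ordinal) (Eacc Facc : Set 𝒲)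
    (vec : List 𝒲) :
    ctx.IIWinsB X S α Eacc Facc vec ↔
      ∃ Y : Set 𝒲, ctx.IsBlockSubspaceOf Y X ∧
        ∀ E : Set 𝒲, ctx.IsFinDimIn E Y →
        ∀ x : 𝒲, x ≠ 0 → x ∈ ctx.fspan (Eacc ∪ E) →
        ∀ n : ℕ, ∀ ξ : Ordinal, ξ < α →
          ∃ F : Set 𝒲, ctx.IsFinDimIn F X ∧ ctx.NatLt n F ∧
            ∃ y : 𝒲, y ≠ 0 ∧ y ∈ ctx.fspan (Facc ∪ F) ∧
              (ξ = 0 → vec ++ [x, y] ∈ S) ∧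
              (ξ ≠ 0 → ctx.IIWinsB X S ξ (ctx.fspan (Eacc ∪ E)) (ctx.fspan (Facc ∪ F))
                (vec ++ [x, y])) := by
  unfold Frame.IIWinsB
  rw [WellFounded.fix_eq]

/-- Several rounds of the asymptotic game. -/
theorem multi_round (X : Set 𝒲) (S : Set (List 𝒲)) (n : ℕ) (ξ : Ordinal) (m : ℕ) :
    ∀ (β : Ordinal) (G : Set 𝒲) (xs : List 𝒲), ctx.IIWinsF X S β G xs →
      ξ + (m : Ordinal) < β →
      ∃ F : Set 𝒲, ctx.IsFinDimIn F X ∧ ctx.NatLt n F ∧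
        ∃ (xs' : List 𝒲) (G' : Set 𝒲), xs <+: xs' ∧ xs.length + m ≤ xs'.length ∧
          (∀ x ∈ xs', x ∈ xs ∨ x ∈ Submodule.span ctx.𝔽 (G ∪ F)) ∧
          G' ⊆ Submodule.span ctx.𝔽 (G ∪ F) ∧
          (ξ = 0 → xs' ∈ S) ∧ (ξ ≠ 0 → ctx.IIWinsF X S ξ G' xs') := by
  classical
  induction m with
  | zero =>
    intro β G xs hw hlt
    obtain ⟨F, hF, hn, x, hx, hxm, h0, h1⟩ := (IIWinsF_iff ctx X S β G xs).1 hw n ξ (by simpa using hlt)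
    rw [fspan_eq] at hxm h1
    refine ⟨F, hF, hn, xs ++ [x], _, List.prefix_append _ _, by simp, ?_, subset_rfl, h0, h1⟩
    intro z hz
    rcases List.mem_append.1 hz with hz | hz
    · exact Or.inl hz
    · rw [List.mem_singleton] at hz
      exact Or.inr (hz ▸ hxm)
  | succ m ih =>
    intro β G xs hw hlt
    obtain ⟨F, ⟨t, ht, hFt⟩, hn, x, hx, hxm, -, h1⟩ :=
      (IIWinsF_iff ctx X S β G xs).1 hw n _ hlt
    have hlt2 : ξ + (m : Ordinal) < ξ + ((m + 1 : ℕ) : Ordinal) := by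
      have : (m : Ordinal) < ((m + 1 : ℕ) : Ordinal) := by exact_mod_cast Nat.lt_succ_self m
      gcongr
    have hne : ξ + ((m + 1 : ℕ) : Ordinal) ≠ 0 := (lt_of_le_of_lt zero_le hlt2).ne'
    obtain ⟨F2, ⟨t2, ht2, hFt2⟩, hn2, xs', G', hpre, hlen, hmem, hG', h0', h1'⟩ :=
      ih _ _ _ (h1 hne) hlt2
    rw [fspan_eq] at hFt hFt2 hxm hmem hG'
    have hsub : Submodule.span ctx.𝔽 (((Submodule.span ctx.𝔽 (G ∪ F) : Submodule ctx.𝔽 𝒲) : Set 𝒲) ∪ F2) ≤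
        Submodule.span ctx.𝔽 (G ∪ ctx.fspan ((t ∪ t2 : Finset 𝒲) : Set 𝒲)) := by
      have hsp : Submodule.span ctx.𝔽 (t : Set 𝒲) ≤ Submodule.span ctx.𝔽 ((t ∪ t2 : Finset 𝒲) : Set 𝒲) :=
        Submodule.span_mono (by simp)
      have hsp2 : Submodule.span ctx.𝔽 (t2 : Set 𝒲) ≤ Submodule.span ctx.𝔽 ((t ∪ t2 : Finset 𝒲) : Set 𝒲) :=
        Submodule.span_mono (by simp)
      rw [fspan_eq, hFt, hFt2]
      refine Submodule.span_le.2 (Set.union_subset (Submodule.span_le.2 (Set.union_subset ?_ ?_)) ?_)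
      · exact fun z hz => Submodule.subset_span (Or.inl hz)
      · exact fun z hz => Submodule.subset_span (Or.inr (hsp hz))
      · exact fun z hz => Submodule.subset_span (Or.inr (hsp2 hz))
    have hsub1 : Submodule.span ctx.𝔽 (G ∪ F) ≤
        Submodule.span ctx.𝔽 (G ∪ ctx.fspan ((t ∪ t2 : Finset 𝒲) : Set 𝒲)) :=
      le_trans (fun z hz => Submodule.subset_span (Or.inl hz)) hsub
    refine ⟨ctx.fspan ((t ∪ t2 : Finset 𝒲) : Set 𝒲), ⟨t ∪ t2, ?_, rfl⟩, ?_, xs', G',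
      (List.prefix_append _ _).trans hpre, ?_, ?_, ?_, h0', h1'⟩
    · rw [Finset.coe_union]; exact Set.union_subset ht ht2
    · rw [fspan_eq]
      apply natLt_span
      intro z hz
      rw [Finset.coe_union] at hz
      rcases hz with hz | hz
      · exact hn z (hFt ▸ Submodule.subset_span hz)
      · exact hn2 z (hFt2 ▸ Submodule.subset_span hz)
    · rw [List.length_append, List.length_singleton] at hlen
      omega
    · intro z hz
      rcases hmem z hz with hz | hz
      · rcases List.mem_append.1 hz with hz | hz
        · exact Or.inl hz
        · rw [List.mem_singleton] at hz
          exact Or.inr (hsub1 (hz ▸ hxm))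
      · exact Or.inr (hsub hz)
    · exact fun z hz => hsub (hG' hz)

/-- The pairs `(∑ c i • y i, ∑ c i • xs i)`. -/
def pairSpan (y : ℕ → 𝒲) (xs : List 𝒲) : Submodule ℝ (𝒲 × 𝒲) :=
  Submodule.span ℝ ((fun i => (y i, xs.getD i 0)) '' ((Finset.range xs.length : Finset ℕ) : Set ℕ))

theorem pairSpan_mono (y : ℕ → 𝒲) {xs xs' : List 𝒲} (h : xs <+: xs') :
    pairSpan y xs ≤ pairSpan y xs' := by
  obtain ⟨r, rfl⟩ := h
  apply Submodule.span_mono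
  rintro _ ⟨i, hi, rfl⟩
  have hi' : i < xs.length := by simpa using hi
  refine ⟨i, by simp; omega, ?_⟩
  simp only [List.getD_append _ _ _ _ hi']

theorem pairSpan_bound (y : ℕ → 𝒲) {xs : List 𝒲} {K : ℝ} (h : OutcomeEquiv K xs y)
    {p : 𝒲 × 𝒲} (hp : p ∈ pairSpan y xs) : (1 / K) * ‖p.2‖ ≤ ‖p.1‖ ∧ ‖p.1‖ ≤ K * ‖p.2‖ := by
  unfold pairSpan at hp
  have hle : ∃ c : ℕ → ℝ, p = ∑ i ∈ Finset.range xs.length, c i • ((y i, xs.getD i 0) : 𝒲 × 𝒲) := by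
    obtain ⟨c, hc⟩ := (Submodule.mem_span_image_finset_iff_exists_fun' ℝ).1 hp
    exact ⟨c, hc.symm⟩
  obtain ⟨c, rfl⟩ := hle
  have := h c
  simpa [Prod.fst_sum, Prod.snd_sum] using this

theorem pairSpan_exists (y : ℕ → 𝒲) {u : 𝒲} (hu : u ∈ Submodule.span ctx.𝔽 (Set.range y)) :
    ∃ m : ℕ, ∀ xs : List 𝒲, m ≤ xs.length →
      ∃ v ∈ Submodule.span ctx.𝔽 {x | x ∈ xs}, (u, v) ∈ pairSpan y xs := by
  obtain ⟨l, rfl⟩ := (Finsupp.mem_span_range_iff_exists_finsupp).1 hu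
  refine ⟨l.support.sup id + 1, fun xs hxs => ?_⟩
  have hlt : ∀ i ∈ l.support, i < xs.length := fun i hi =>
    lt_of_lt_of_le (Nat.lt_succ_of_le (Finset.le_sup (f := id) hi)) hxs
  refine ⟨l.sum fun i a => a • xs.getD i 0, ?_, ?_⟩
  · refine Submodule.sum_mem _ fun i hi => Submodule.smul_mem _ _ (Submodule.subset_span ?_)
    have := hlt i hi
    rw [List.getD_eq_getElem _ _ this]
    exact List.getElem_mem this
  · have : ((l.sum fun i a => a • y i), (l.sum fun i a => a • xs.getD i 0)) =
      ∑ i ∈ l.support, ((l i : ℝ)) • ((y i, xs.getD i 0) : 𝒲 × 𝒲) := by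
      ext
      · rw [Prod.fst_sum]; rfl
      · rw [Prod.snd_sum]; rfl
    rw [this]
    refine Submodule.sum_mem _ fun i hi => Submodule.smul_mem _ _ (Submodule.subset_span ?_)
    exact ⟨i, by simpa using hlt i hi, rfl⟩

theorem pair_inv (y : ℕ → 𝒲) {xs xs' : List 𝒲} (hpre : xs <+: xs') {vec : List 𝒲} {r : ℕ}
    (hr : vec.length = 2 * r)
    (hvec : ∀ l < r, (vec.getD (2 * l) 0, vec.getD (2 * l + 1) 0) ∈ pairSpan y xs)
    {u v : 𝒲} (huv : (u, v) ∈ pairSpan y xs') :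
    (vec ++ [u, v]).length = 2 * (r + 1) ∧
      ∀ l < r + 1, ((vec ++ [u, v]).getD (2 * l) 0, (vec ++ [u, v]).getD (2 * l + 1) 0)
        ∈ pairSpan y xs' := by
  refine ⟨by simp; omega, fun l hl => ?_⟩
  rcases Nat.lt_succ_iff_lt_or_eq.1 hl with hl | rfl
  · rw [List.getD_append _ _ _ _ (by omega), List.getD_append _ _ _ _ (by omega)]
    exact pairSpan_mono y hpre (hvec l hl)
  · rw [List.getD_append_right _ _ _ _ (by omega), List.getD_append_right _ _ _ _ (by omega)]
    simpa [hr] using huv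

theorem pair_outcome (y : ℕ → 𝒲) {xs : List 𝒲} {K : ℝ} (hK : 1 ≤ K) (h : OutcomeEquiv K xs y)
    {vec : List 𝒲} {r : ℕ} (hr : vec.length = 2 * r)
    (hvec : ∀ l < r, (vec.getD (2 * l) 0, vec.getD (2 * l + 1) 0) ∈ pairSpan y xs) :
    PairOutcomeEquiv K vec := by
  intro a
  have hr' : vec.length / 2 = r := by omega
  rw [hr']
  have hs : ∑ l ∈ Finset.range r, a l • ((vec.getD (2 * l) 0, vec.getD (2 * l + 1) 0) : 𝒲 × 𝒲)
      ∈ pairSpan y xs :=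
    Submodule.sum_mem _ fun l hl => Submodule.smul_mem _ _ (hvec l (Finset.mem_range.1 hl))
  have hb := pairSpan_bound y h hs
  simp only [Prod.fst_sum, Prod.snd_sum, Prod.smul_fst, Prod.smul_snd] at hb
  have hK0 : 0 < K := by linarith
  obtain ⟨h1, h2⟩ := hb
  rw [one_div, inv_mul_le_iff₀ hK0] at h1 ⊢
  exact ⟨h2, h1⟩

theorem main_ind (X : Set 𝒲) (y : ℕ → 𝒲) (hy : ctx.IsBlockSeq y) (hyX : ∀ n, y n ∈ X)
    (K : ℝ) (hK : 1 ≤ K) (α : Ordinal) :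
    ∀ (Eacc Facc G : Set 𝒲) (vec xs : List 𝒲) (r : ℕ),
      ctx.IIWinsF X {l | OutcomeEquiv K l y} (Ordinal.omega0 * α) G xs →
      Eacc ⊆ Submodule.span ctx.𝔽 (Set.range y) →
      G ⊆ Submodule.span ctx.𝔽 Facc →
      (∀ x ∈ xs, x ∈ Submodule.span ctx.𝔽 Facc) →
      vec.length = 2 * r →
      (∀ l < r, (vec.getD (2 * l) 0, vec.getD (2 * l + 1) 0) ∈ pairSpan y xs) →
      ctx.IIWinsB X {l | PairOutcomeEquiv K l} α Eacc Facc vec := by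
  induction α using WellFoundedLT.induction with
  | ind α ih =>
  intro Eacc Facc G vec xs r hw hE hG hxs hr hvec
  rw [IIWinsB_iff]
  refine ⟨ctx.fspan (Set.range y), ⟨y, hy, hyX, rfl⟩, ?_⟩
  rintro E ⟨t, ht, rfl⟩ u hu0 hu n ξ hξ
  rw [fspan_eq] at ht
  have hE' : ((Submodule.span ctx.𝔽 (Eacc ∪ ctx.fspan ↑t) : Submodule ctx.𝔽 𝒲) : Set 𝒲) ⊆
      Submodule.span ctx.𝔽 (Set.range y) := by
    refine Submodule.span_le.2 (Set.union_subset hE ?_)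
    rw [fspan_eq]
    exact Submodule.span_le.2 ht
  rw [fspan_eq] at hu
  obtain ⟨m, hm⟩ := pairSpan_exists ctx y (hE' hu)
  have hlt : Ordinal.omega0 * ξ + (m : Ordinal) < Ordinal.omega0 * α := by
    calc Ordinal.omega0 * ξ + (m : Ordinal) < Ordinal.omega0 * ξ + Ordinal.omega0 := by
          gcongr; exact Ordinal.natCast_lt_omega0 m
      _ = Ordinal.omega0 * Order.succ ξ := (Ordinal.mul_succ _ _).symm
      _ ≤ Ordinal.omega0 * α := by gcongr; exact Order.succ_le_of_lt hξ
  obtain ⟨F, hF, hnF, xs', G', hpre, hlen, hmem, hG', h0, h1⟩ :=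
    multi_round ctx X _ n (Ordinal.omega0 * ξ) m _ _ _ hw hlt
  obtain ⟨v, hv, huv⟩ := hm xs' (by omega)
  have hsub : Submodule.span ctx.𝔽 (G ∪ F) ≤ Submodule.span ctx.𝔽 (Facc ∪ F) :=
    Submodule.span_le.2 (Set.union_subset
      (fun z hz => Submodule.span_mono Set.subset_union_left (hG hz))
      (fun z hz => Submodule.subset_span (Or.inr hz)))
  have hxs' : ∀ x ∈ xs', x ∈ Submodule.span ctx.𝔽 (Facc ∪ F) := by
    intro x hx
    rcases hmem x hx with hx | hx
    · exact Submodule.span_mono Set.subset_union_left (hxs x hx)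
    · exact hsub hx
  have hω : ξ ≠ 0 → Ordinal.omega0 * ξ ≠ 0 := fun h => mul_ne_zero Ordinal.omega0_ne_zero h
  have hext : ∃ xs'', xs' <+: xs'' ∧ OutcomeEquiv K xs'' y := by
    by_cases hξ0 : ξ = 0
    · exact ⟨xs', List.prefix_refl _, h0 (by simp [hξ0])⟩
    · obtain ⟨_, _, _, x, _, _, hx, _⟩ := (IIWinsF_iff ctx _ _ _ _ _).1 (h1 (hω hξ0)) 0 0
        (pos_iff_ne_zero.2 (hω hξ0))
      exact ⟨_, List.prefix_append _ _, hx rfl⟩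
  have hv0 : v ≠ 0 := by
    rintro rfl
    obtain ⟨xs'', hp, ho⟩ := hext
    have := (pairSpan_bound y ho (pairSpan_mono y hp huv)).2
    simp at this
    exact hu0 this
  obtain ⟨hr', hvec'⟩ := pair_inv y hpre hr hvec huv
  refine ⟨F, hF, hnF, v, hv0, ?_, ?_, ?_⟩
  · rw [fspan_eq]
    exact Submodule.span_le.2 (fun z hz => hxs' z hz) hv
  · intro hξ0
    exact pair_outcome y hK (h0 (by simp [hξ0])) hr' hvec'
  · intro hξ0
    rw [fspan_eq, fspan_eq ctx (Facc ∪ F)]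
    refine ih ξ hξ _ _ G' _ xs' (r + 1) (h1 (hω hξ0)) hE' ?_ ?_ hr' hvec'
    · rw [Submodule.span_span]
      exact fun z hz => hsub (hG' hz)
    · rw [Submodule.span_span]
      exact hxs'

end Helpers

/-- If II has a strategy in `F^{ω·α}_X` to play outcomes
`K`-equivalent to the block sequence `(y n)` in `X`, then II has a strategy in `B^α_X` to
play outcomes `(u 0, v 0, …, u k, v k)` with `(u i) ∼_K (v i)`. -/
theorem going_to_adversarial
    (𝒲 : Type) [NormedAddCommGroup 𝒲] [NormedSpace ℝ 𝒲] (ctx : Frame 𝒲)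
    (X : Set 𝒲) (hX : ctx.IsBlockSubspace X)
    (y : ℕ → 𝒲) (hy : ctx.IsBlockSeq y) (hyX : ∀ n, y n ∈ X)
    (α : Ordinal) (hα : α < (Cardinal.aleph 1).ord) (K : ℝ) (hK : 1 ≤ K)
    (h : ctx.IIStratF X (Ordinal.omega0 * α) {l | OutcomeEquiv K l y}) :
    ctx.IIStratB X α {l | PairOutcomeEquiv K l} := by
  constructor
  · intro _ a
    simp
  · intro hα0
    have hw := h.2 (mul_ne_zero Ordinal.omega0_ne_zero hα0)
    refine main_ind ctx X y hy hyX K hK α _ _ _ [] [] 0 hw ?_ ?_ ?_ rfl ?_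
    · rw [fspan_eq]
      exact Submodule.span_mono (Set.empty_subset _)
    · exact Submodule.subset_span
    · simp
    · intro l hl
      exact absurd hl (Nat.not_lt_zero l)

end Rosendal
end

section
/- Suppose X ⊆ W is a block subspace, (y_n) is a block sequence in W, α < ω₁ and K, C ≥ 1. Assume that (a) player II has a strategy in F^α_X to play outcomes (x_0,…,x_k) with (x_0,…,x_k) ∼_K (y_0,…,y_k), and (b) player II has a strategy in A^α_X to play outcomes (u_0,v_0,…,u_k,v_k) with (u_0,…,u_k) ∼_C (v_0,…,v_k). Then II has a strategy in the Gowers game G^α_X to play outcomes (v_0,…,v_k) with (v_0,…,v_k) ∼_{KC} (y_0,…,y_k). -/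
open Filter Topology

namespace Rosendal

theorem getD_pair_even {V : Type} [Zero V] (p : List (V × V)) (i : ℕ) :
    (p.flatMap (fun q => [q.1, q.2])).getD (2 * i) 0 = (p.map Prod.fst).getD i 0 := by
  induction p generalizing i with
  | nil => simp
  | cons q p ih =>
    cases i with
    | zero => simp
    | succ i => simpa [Nat.mul_add] using ih i

theorem getD_pair_odd {V : Type} [Zero V] (p : List (V × V)) (i : ℕ) :
    (p.flatMap (fun q => [q.1, q.2])).getD (2 * i + 1) 0 = (p.map Prod.snd).getD i 0 := by
  induction p generalizing i with
  | nil => simp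
  | cons q p ih =>
    cases i with
    | zero => simp
    | succ i => simpa [Nat.mul_add] using ih i

theorem length_pair {V : Type} (p : List (V × V)) :
    (p.flatMap (fun q => [q.1, q.2])).length = 2 * p.length := by
  induction p with
  | nil => simp
  | cons q p ih => simp [Nat.mul_add]; omega

theorem outcome_transfer {V : Type} [NormedAddCommGroup V] [NormedSpace ℝ V]
    (K C : ℝ) (hK : 1 ≤ K) (hC : 1 ≤ C) (y : ℕ → V) (p : List (V × V))
    (h1 : OutcomeEquiv K (p.map Prod.fst) y)
    (h2 : PairOutcomeEquiv C (p.flatMap (fun q => [q.1, q.2]))) :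
    OutcomeEquiv (K * C) (p.map Prod.snd) y := by
  intro a
  have h1 := h1 a
  have h2 := h2 a
  simp only [getD_pair_even, getD_pair_odd, length_pair, List.length_map,
    Nat.mul_div_cancel_left _ (Nat.zero_lt_two)] at h1 h2 ⊢
  obtain ⟨a1, a2⟩ := h1
  obtain ⟨b1, b2⟩ := h2
  have hK0 : 0 < K := by linarith
  have hC0 : 0 < C := by linarith
  rw [one_div, inv_mul_le_iff₀ hK0] at a1
  rw [one_div, inv_mul_le_iff₀ hC0] at b1
  refine ⟨?_, ?_⟩
  · rw [one_div, inv_mul_le_iff₀ (mul_pos hK0 hC0)]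
    refine b2.trans ((mul_le_mul_of_nonneg_left a1 hC0.le).trans_eq (by ring))
  · refine a2.trans ((mul_le_mul_of_nonneg_left b1 hK0.le).trans_eq (by ring))

theorem wins_transfer {V : Type} [NormedAddCommGroup V] [NormedSpace ℝ V] (ctx : Frame V)
    (X : Set V) (y : ℕ → V) (K C : ℝ) (hK : 1 ≤ K) (hC : 1 ≤ C) (α : Ordinal) :
    ∀ (E F : Set V) (p : List (V × V)),
      ctx.IIWinsF X {l | OutcomeEquiv K l y} α E (p.map Prod.fst) →
      ctx.IIWinsA X {l | PairOutcomeEquiv C l} α E F (p.flatMap (fun q => [q.1, q.2])) →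
      ctx.IIWinsG X {l | OutcomeEquiv (K * C) l y} α F (p.map Prod.snd) := by
  induction α using WellFoundedLT.induction with
  | ind α ih =>
    intro E F p hF hA
    unfold Frame.IIWinsF at hF
    unfold Frame.IIWinsA at hA
    unfold Frame.IIWinsG
    rw [WellFounded.fix_eq] at hF hA ⊢
    intro Y hY ξ hξ
    obtain ⟨n, hA⟩ := hA
    obtain ⟨E', hE', hn, u, hu, huE, hF0, hF1⟩ := hF n ξ hξ
    obtain ⟨F', hF', v, hv, hvF, hA0, hA1⟩ := hA E' hE' hn u hu huE Y hY ξ hξ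
    refine ⟨F', hF', v, hv, hvF, fun h0 => ?_, fun h0 => ?_⟩
    · have := outcome_transfer K C hK hC y (p ++ [(u, v)])
        (by simpa using hF0 h0) (by simpa using hA0 h0)
      simpa using this
    · have := ih ξ hξ (ctx.fspan (E ∪ E')) (ctx.fspan (F ∪ F')) (p ++ [(u, v)])
        (by simpa [Frame.IIWinsF] using hF1 h0) (by simpa [Frame.IIWinsA] using hA1 h0)
      simpa [Frame.IIWinsG] using this

/-- If (a) II has a strategy in `F^α_X` to play outcomes
`K`-equivalent to `(y n)` and (b) II has a strategy in `A^α_X` to play outcomes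
`(u 0, v 0, …, u k, v k)` with `(u i) ∼_C (v i)`, then II has a strategy in the Gowers
game `G^α_X` to play outcomes `KC`-equivalent to `(y n)`. -/
theorem gowers_game_transfer
    (𝒲 : Type) [NormedAddCommGroup 𝒲] [NormedSpace ℝ 𝒲] (ctx : Frame 𝒲)
    (X : Set 𝒲) (hX : ctx.IsBlockSubspace X)
    (y : ℕ → 𝒲) (hy : ctx.IsBlockSeq y)
    (α : Ordinal) (hα : α < (Cardinal.aleph 1).ord)
    (K C : ℝ) (hK : 1 ≤ K) (hC : 1 ≤ C)
    (ha : ctx.IIStratF X α {l | OutcomeEquiv K l y})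
    (hb : ctx.IIStratA X α {l | PairOutcomeEquiv C l}) :
    ctx.IIStratG X α {l | OutcomeEquiv (K * C) l y} := by
  refine ⟨fun h0 => ?_, fun h0 => ?_⟩
  · exact outcome_transfer K C hK hC y [] (by simpa using ha.1 h0) (by simpa using hb.1 h0)
  · exact wins_transfer ctx X y K C hK hC α (ctx.fspan ∅) (ctx.fspan ∅) [] (ha.2 h0) (hb.2 h0)

end Rosendal
end
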